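/- Let F₃ be the analytic function on the open unit disc 𝔻 = {q ∈ ℂ : |q| < 1} defined by the absolutely convergent series F₃(q) = Σ_{n=1}^∞ n² qⁿ/(1 − qⁿ), and let D = q·d/dq. Then the functions F₃, D F₃, D² F₃, … are linearly independent over the field of rational functions: for every m ≥ 0 and every choice of polynomials p₀, …, p_m ∈ ℂ[q], not all zero, the analytic function q ↦ Σ_{i=0}^m p_i(q)·(Dⁱ F₃)(q) is not identically zero on 𝔻. -/

import Mathlib

/-!
STATEMENT 8: the functions `F₃, D F₃, D² F₃, …` (where `F₃(q) = Σ_{n≥1}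
n² qⁿ/(1−qⁿ)` on the unit disc and `D = q·d/dq`) are linearly independent over
the field of rational functions: no nontrivial linear combination with
polynomial coefficients vanishes identically on the disc.
-/

open Complex

/-- `F₃(q) = Σ_{n=1}^∞ n² qⁿ/(1 − qⁿ)`. -/
noncomputable def F₃ : ℂ → ℂ :=
  fun q => ∑' n : ℕ, ((n : ℂ) + 1) ^ 2 * q ^ (n + 1) / (1 - q ^ (n + 1))

/-- The operator `D = q · d/dq`. -/
noncomputable def Dop : (ℂ → ℂ) → ℂ → ℂ := fun f q => q * deriv f q

/-!
Write `σ₂(n) = n² f(n)` with `f(n) = ∑_{d ∣ n} d⁻²`, so that `F₃ = ∑ n² f(n) qⁿ` and `D` multiplies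
the `n`-th coefficient by `n`. In a relation `∑_{i ≤ m} pᵢ Dⁱ F₃ = 0` with `p_m ≠ 0`, the `n`-th
coefficient divided by `n ^ (m + 2)` is `∑ⱼ cⱼ f(n - j)` up to a term tending to `0`, where
`p_m = ∑ⱼ cⱼ qʲ`. The function `f` makes sense on all of `ℤ` (with `f(0) = ∑ d⁻²`) and is limit
periodic: `f(k + N!) → f(k)` as `N → ∞`. Letting `n` run through `k + N!` therefore gives
`∑ⱼ cⱼ f(k - j) = 0` for every `k`. But `f` is a positive combination of indicators of the subgroups
`dℤ`, hence strictly positive definite on `ℤ`, so all `cⱼ` vanish.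
-/

open Filter Finset PowerSeries
open ArithmeticFunction (sigma sigma_eq_sum_div sigma_le_pow_succ)
open scoped Topology Polynomial Nat

/-- The function `n ↦ ∑_{d ∣ n} w d` extended to all integers `n`; at `n = 0` it is the full sum of
the weights. Only meaningful for summable `w`. -/
noncomputable def divisorSum (w : ℕ → ℝ) (n : ℤ) : ℝ :=
  ∑' d : ℕ, if (d : ℤ) ∣ n then w d else 0

section DivisorSum

variable {w : ℕ → ℝ}

lemma hasSum_divisorSum (hw : Summable w) (n : ℤ) :
    HasSum (fun d : ℕ => if (d : ℤ) ∣ n then w d else 0) (divisorSum w n) :=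
  Summable.hasSum <| (hw.indicator {d : ℕ | (d : ℤ) ∣ n}).congr fun d => by
    simp [Set.indicator_apply]

lemma tendsto_add_factorial_atTop (k : ℕ) : Tendsto (fun N : ℕ => k + N !) atTop atTop :=
  tendsto_atTop_mono (fun _ => Nat.le_add_left _ k) factorial_tendsto_atTop

lemma eventually_dvd_add_factorial_iff {d : ℕ} (hd : d ≠ 0) (n : ℤ) :
    ∀ᶠ N : ℕ in atTop, (d : ℤ) ∣ n + (N ! : ℕ) ↔ (d : ℤ) ∣ n := by
  filter_upwards [eventually_ge_atTop d] with N hN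
  exact dvd_add_left (Int.natCast_dvd_natCast.2 (Nat.dvd_factorial (Nat.pos_of_ne_zero hd) hN))

lemma tendsto_divisorSum_add_factorial (hw : Summable w) (hw₀ : w 0 = 0) (n : ℤ) :
    Tendsto (fun N : ℕ => divisorSum w (n + (N ! : ℕ))) atTop (𝓝 (divisorSum w n)) := by
  refine tendsto_tsum_of_dominated_convergence hw.norm (fun d => ?_)
    (Eventually.of_forall fun N d => ?_)
  · rcases eq_or_ne d 0 with rfl | hd
    · simp [hw₀]
    · refine tendsto_const_nhds.congr' ?_
      filter_upwards [eventually_dvd_add_factorial_iff hd n] with N hN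
      simp only [hN]
  · split_ifs <;> simp

lemma sum_sum_ite_eq_mul_eq_sum_sq {ι κ R : Type*} [CommSemiring R] [DecidableEq κ]
    (s : Finset ι) (π : ι → κ) (c : ι → R) :
    ∑ i ∈ s, ∑ j ∈ s, (if π j = π i then c i * c j else 0) =
      ∑ a ∈ s.image π, (∑ i ∈ s with π i = a, c i) ^ 2 := by
  rw [← sum_fiberwise_of_maps_to fun i hi => mem_image_of_mem π hi]
  refine sum_congr rfl fun a _ => ?_
  rw [sq, sum_mul]
  refine sum_congr rfl fun i hi => ?_
  rw [(mem_filter.1 hi).2, ← sum_filter, mul_sum]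

lemma sum_sum_ite_dvd_sub_nonneg {ι : Type*} (s : Finset ι) (x : ι → ℤ) (c : ι → ℝ) (d : ℕ) :
    0 ≤ ∑ i ∈ s, ∑ j ∈ s, (if (d : ℤ) ∣ x i - x j then c i * c j else 0) := by
  simp only [← ZMod.intCast_eq_intCast_iff_dvd_sub]
  rw [sum_sum_ite_eq_mul_eq_sum_sq s (fun i => (x i : ZMod d))]
  positivity

lemma eventually_dvd_sub_iff_eq {ι : Type*} (s : Finset ι) {x : ι → ℤ}
    (hx : Set.InjOn x s) :
    ∀ᶠ d : ℕ in atTop, ∀ i ∈ s, ∀ j ∈ s, (d : ℤ) ∣ x i - x j ↔ i = j := by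
  simp only [eventually_all_finset]
  intro i hi j hj
  filter_upwards [eventually_gt_atTop (x i - x j).natAbs] with d hd
  refine ⟨fun hdvd => hx hi hj (sub_eq_zero.1 ?_), fun hij => by simp [hij]⟩
  exact Int.eq_zero_of_abs_lt_dvd hdvd (by rw [Int.abs_eq_natAbs]; exact_mod_cast hd)

theorem sum_sum_mul_divisorSum_sub_pos (hw : Summable w) (hw_nonneg : 0 ≤ w)
    (hw_pos : ∃ᶠ d in atTop, 0 < w d) {ι : Type*} {s : Finset ι} {x : ι → ℤ}
    (hx : Set.InjOn x s) {c : ι → ℝ} (hc : ∃ i ∈ s, c i ≠ 0) :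
    0 < ∑ i ∈ s, ∑ j ∈ s, c i * c j * divisorSum w (x i - x j) := by
  classical
  set Q : ℕ → ℝ := fun d => ∑ i ∈ s, ∑ j ∈ s, (if (d : ℤ) ∣ x i - x j then c i * c j else 0)
    with hQ
  have hsum : HasSum (fun d => w d * Q d)
      (∑ i ∈ s, ∑ j ∈ s, c i * c j * divisorSum w (x i - x j)) := by
    simp only [hQ, mul_sum, mul_ite, mul_zero]
    refine hasSum_sum fun i _ => hasSum_sum fun j _ => ?_
    simpa only [mul_ite, mul_zero, mul_comm (w _)] using
      (hasSum_divisorSum hw (x i - x j)).mul_left (c i * c j)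
  obtain ⟨d, hwd, hd⟩ := (hw_pos.and_eventually (eventually_dvd_sub_iff_eq s hx)).exists
  have hQd : 0 < Q d := by
    obtain ⟨i, hi, hci⟩ := hc
    calc 0 < ∑ i ∈ s, c i * c i :=
          sum_pos' (fun i _ => mul_self_nonneg _) ⟨i, hi, mul_self_pos.2 hci⟩
      _ = Q d := sum_congr rfl fun i hi => by
          rw [sum_congr rfl fun j hj => by rw [if_congr (hd i hi j hj) rfl rfl],
            sum_ite_eq, if_pos hi]
  rw [← hsum.tsum_eq]
  exact hsum.summable.tsum_pos
    (fun d => mul_nonneg (hw_nonneg d) (sum_sum_ite_dvd_sub_nonneg s x c d)) d (mul_pos hwd hQd)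

lemma eq_zero_of_sum_mul_divisorSum_sub_eq_zero (hw : Summable w) (hw_nonneg : 0 ≤ w)
    (hw_pos : ∃ᶠ d in atTop, 0 < w d) {ι : Type*} {s : Finset ι} {x : ι → ℤ}
    (hx : Set.InjOn x s) {c : ι → ℝ}
    (h : ∀ i ∈ s, ∑ j ∈ s, c j * divisorSum w (x i - x j) = 0) :
    ∀ i ∈ s, c i = 0 := by
  by_contra! hc
  refine (sum_sum_mul_divisorSum_sub_pos hw hw_nonneg hw_pos hx hc).ne' ?_
  refine sum_eq_zero fun i hi => ?_
  simp only [mul_assoc, ← mul_sum, h i hi, mul_zero]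

theorem polynomial_eq_zero_of_sum_mul_divisorSum (hw : Summable w) (hw_nonneg : 0 ≤ w)
    (hw_pos : ∃ᶠ d in atTop, 0 < w d) {P : ℂ[X]}
    (hP : ∀ k : ℕ, (P.sum fun j c => c * (divisorSum w (k - j) : ℂ)) = 0) : P = 0 := by
  have hx : Set.InjOn (fun j : ℕ => (j : ℤ)) P.support := Nat.cast_injective.injOn
  have hre := eq_zero_of_sum_mul_divisorSum_sub_eq_zero hw hw_nonneg hw_pos hx
    (c := fun j => (P.coeff j).re) fun k _ => by
      simpa [Polynomial.sum_def] using congrArg Complex.re (hP k)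
  have him := eq_zero_of_sum_mul_divisorSum_sub_eq_zero hw hw_nonneg hw_pos hx
    (c := fun j => (P.coeff j).im) fun k _ => by
      simpa [Polynomial.sum_def] using congrArg Complex.im (hP k)
  rw [← Polynomial.support_eq_empty, eq_empty_iff_forall_notMem]
  exact fun j hj => Polynomial.mem_support_iff.1 hj (Complex.ext (hre j hj) (him j hj))

end DivisorSum

/-- The formal counterpart of `D = q · d/dq`. -/
noncomputable def theta {R : Type*} [Semiring R] (A : R⟦X⟧) : R⟦X⟧ :=
  PowerSeries.mk fun n => n * coeff n A

lemma coeff_theta_iterate {R : Type*} [Semiring R] (A : R⟦X⟧) (i n : ℕ) :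
    coeff n (theta^[i] A) = n ^ i * coeff n A := by
  induction i with
  | zero => simp
  | succ i ih =>
    rw [Function.iterate_succ_apply', theta, coeff_mk, ih, ← mul_assoc, pow_succ']

section ThetaIterates

lemma coeff_polynomial_smul {R : Type*} [CommSemiring R] (P : R[X]) (B : R⟦X⟧) {n : ℕ}
    (hn : P.natDegree ≤ n) : coeff n (P • B) = P.sum fun j c => c * coeff (n - j) B := by
  rw [Algebra.smul_def, PowerSeries.algebraMap_apply', coeff_mul,
    Finset.Nat.sum_antidiagonal_eq_sum_range_succ_mk,
    P.sum_over_range' (by simp) (n + 1) (Nat.lt_succ_of_le hn)]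
  simp

lemma tendsto_coeff_polynomial_smul_div {α : Type*} {l : Filter α} {n : α → ℕ}
    (hn : Tendsto n l atTop) {B : ℂ⟦X⟧} {ν : α → ℂ} {L : ℕ → ℂ}
    (hB : ∀ j, Tendsto (fun x => coeff (n x - j) B / ν x) l (𝓝 (L j))) (P : ℂ[X]) :
    Tendsto (fun x => coeff (n x) (P • B) / ν x) l (𝓝 (P.sum fun j c => c * L j)) := by
  have hsum : Tendsto (fun x => ∑ j ∈ P.support, P.coeff j * (coeff (n x - j) B / ν x)) l
      (𝓝 (P.sum fun j c => c * L j)) :=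
    tendsto_finsetSum _ fun j _ => (hB j).const_mul _
  refine hsum.congr' ?_
  filter_upwards [hn.eventually_ge_atTop P.natDegree] with x hx
  simp only [coeff_polynomial_smul P B hx, Polynomial.sum_def, sum_div, mul_div_assoc]

lemma tendsto_natCast_sub_div (j : ℕ) :
    Tendsto (fun n : ℕ => ((n - j : ℕ) : ℂ) / n) atTop (𝓝 1) := by
  refine (tendsto_add_atTop_iff_nat j).1 ?_
  simpa using tendsto_natCast_div_add_atTop (j : ℂ)

lemma tendsto_natCast_sub_pow_div_pow {i m : ℕ} (him : i ≤ m) (j : ℕ) :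
    Tendsto (fun n : ℕ => ((n - j : ℕ) : ℂ) ^ i / (n : ℂ) ^ m) atTop
      (𝓝 (if i = m then 1 else 0)) := by
  have hlim : Tendsto (fun n : ℕ => (((n - j : ℕ) : ℂ) / n) ^ i * (n : ℂ)⁻¹ ^ (m - i)) atTop
      (𝓝 (1 ^ i * 0 ^ (m - i))) :=
    ((tendsto_natCast_sub_div j).pow i).mul (tendsto_inv_atTop_nhds_zero_nat.pow (m - i))
  have hval : (1 : ℂ) ^ i * 0 ^ (m - i) = if i = m then 1 else 0 := by
    rw [one_pow, one_mul, zero_pow_eq]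
    exact if_congr (by omega) rfl rfl
  rw [← hval]
  refine hlim.congr fun n => ?_
  rw [div_pow, inv_pow, ← div_eq_mul_inv, div_div, ← pow_add, Nat.add_sub_cancel' him]

variable {w : ℕ → ℝ} {s : ℕ} {A : ℂ⟦X⟧}

lemma tendsto_coeff_theta_iterate_div (hw : Summable w) (hw₀ : w 0 = 0)
    (hA : ∀ n : ℕ, coeff n A = n ^ s * (divisorSum w n : ℂ)) {i m : ℕ} (him : i ≤ m) (j k : ℕ) :
    Tendsto (fun N : ℕ => coeff (k + (N !) - j) (theta^[i] A) / ((k + N ! : ℕ) : ℂ) ^ (m + s))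
      atTop (𝓝 (if i = m then (divisorSum w (k - j) : ℂ) else 0)) := by
  have hpow := (tendsto_natCast_sub_pow_div_pow (Nat.add_le_add_right him s) j).comp
    (tendsto_add_factorial_atTop k)
  have hdiv := (Complex.continuous_ofReal.tendsto _).comp
    (tendsto_divisorSum_add_factorial hw hw₀ (k - j))
  have hlim := hpow.mul hdiv
  simp only [Nat.add_right_cancel_iff, ite_mul, one_mul, zero_mul] at hlim
  refine hlim.congr' ?_
  filter_upwards [(tendsto_add_factorial_atTop k).eventually_ge_atTop j] with N hN
  have hcast : ((k + (N !) - j : ℕ) : ℤ) = k - j + (N ! : ℕ) := by omega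
  simp only [Function.comp_apply, coeff_theta_iterate, hA, hcast]
  ring

lemma sum_coeff_mul_divisorSum_eq_zero_of_relation (hw : Summable w) (hw₀ : w 0 = 0)
    (hA : ∀ n : ℕ, coeff n A = n ^ s * (divisorSum w n : ℂ)) {t : Finset ℕ} {p : ℕ → ℂ[X]}
    (hrel : ∑ i ∈ t, p i • theta^[i] A = 0) {m : ℕ} (hm : m ∈ t) (hmax : ∀ i ∈ t, i ≤ m) (k : ℕ) :
    ((p m).sum fun j c => c * (divisorSum w (k - j) : ℂ)) = 0 := by
  have hlim := tendsto_finsetSum t fun i hi =>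
    tendsto_coeff_polynomial_smul_div (tendsto_add_factorial_atTop k) (fun j =>
      tendsto_coeff_theta_iterate_div hw hw₀ hA (hmax i hi) j k) (p i)
  simp only [← sum_div, ← map_sum, hrel, map_zero, zero_div] at hlim
  have hzero := tendsto_nhds_unique hlim tendsto_const_nhds
  rw [sum_eq_single_of_mem m hm fun i _ him => by simp [him, Polynomial.sum_def]] at hzero
  simpa using hzero

theorem linearIndependent_theta_iterate (hw : Summable w) (hw₀ : w 0 = 0) (hw_nonneg : 0 ≤ w)
    (hw_pos : ∃ᶠ d in atTop, 0 < w d)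
    (hA : ∀ n : ℕ, coeff n A = n ^ s * (divisorSum w n : ℂ)) :
    LinearIndependent ℂ[X] fun i : ℕ => theta^[i] A := by
  rw [linearIndependent_iff]
  intro p hrel
  by_contra hp
  have hsupp : p.support.Nonempty := Finsupp.support_nonempty_iff.2 hp
  have hmax := p.support.max'_mem hsupp
  refine Finsupp.mem_support_iff.1 hmax
    (polynomial_eq_zero_of_sum_mul_divisorSum hw hw_nonneg hw_pos fun k => ?_)
  exact sum_coeff_mul_divisorSum_eq_zero_of_relation hw hw₀ hA hrel hmax
    (fun i hi => p.support.le_max' i hi) k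

end ThetaIterates

/-- The generating series `∑ σₛ(n) Xⁿ`; its constant term is `0` because `σ s 0 = 0`. -/
noncomputable def sigmaSeries (s : ℕ) : ℂ⟦X⟧ :=
  PowerSeries.mk fun n => (sigma s n : ℂ)

lemma sigma_eq_pow_mul_divisorSum {s : ℕ} (hs : s ≠ 0) (n : ℕ) :
    (sigma s n : ℝ) = n ^ s * divisorSum (fun d => ((d : ℝ) ^ s)⁻¹) n := by
  rcases eq_or_ne n 0 with rfl | hn
  · simp [hs]
  have hfin : divisorSum (fun d => ((d : ℝ) ^ s)⁻¹) n = ∑ d ∈ n.divisors, ((d : ℝ) ^ s)⁻¹ := by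
    rw [divisorSum, tsum_eq_sum (s := n.divisors)]
    · exact sum_congr rfl fun d hd =>
        if_pos (Int.natCast_dvd_natCast.2 (Nat.dvd_of_mem_divisors hd))
    · intro d hd
      exact if_neg fun h => hd (Nat.mem_divisors.2 ⟨Int.natCast_dvd_natCast.1 h, hn⟩)
  rw [hfin, sigma_eq_sum_div, mul_sum, Nat.cast_sum]
  refine sum_congr rfl fun d hd => ?_
  rw [Nat.cast_pow, Nat.cast_div_charZero (Nat.dvd_of_mem_divisors hd), div_pow, div_eq_mul_inv]

theorem linearIndependent_theta_iterate_sigmaSeries {s : ℕ} (hs : 1 < s) :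
    LinearIndependent ℂ[X] fun i : ℕ => theta^[i] (sigmaSeries s) := by
  have hs₀ : s ≠ 0 := by omega
  refine linearIndependent_theta_iterate (w := fun d => ((d : ℝ) ^ s)⁻¹) (s := s)
    (Real.summable_nat_pow_inv.2 hs) (by simp [hs₀]) (fun d => by positivity) ?_ fun n => ?_
  · refine Eventually.frequently ?_
    filter_upwards [eventually_gt_atTop 0] with d hd
    positivity
  · rw [sigmaSeries, coeff_mk]
    exact_mod_cast congrArg (fun x : ℝ => (x : ℂ)) (sigma_eq_pow_mul_divisorSum hs₀ n)

/-- The power series `A` converges on the open unit disc, with sum `f`. -/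
def RepresentsOnDisc (A : ℂ⟦X⟧) (f : ℂ → ℂ) : Prop :=
  ∀ q : ℂ, ‖q‖ < 1 → HasSum (fun n => coeff n A * q ^ n) (f q)

namespace RepresentsOnDisc

variable {A B : ℂ⟦X⟧} {f g : ℂ → ℂ}

lemma eq_zero (hA : RepresentsOnDisc A f) (hf : ∀ q : ℂ, ‖q‖ < 1 → f q = 0) : A = 0 := by
  have hseries : HasFPowerSeriesAt (0 : ℂ → ℂ)
      (FormalMultilinearSeries.ofScalars ℂ fun n => coeff n A) 0 := by
    rw [hasFPowerSeriesAt_iff]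
    filter_upwards [Metric.ball_mem_nhds (0 : ℂ) one_pos] with q hq
    have hq' : ‖q‖ < 1 := by simpa using hq
    simpa [FormalMultilinearSeries.coeff_ofScalars, mul_comm, hf q hq'] using hA q hq'
  ext n
  exact congrFun ((FormalMultilinearSeries.ofScalars_series_eq_zero ℂ).1 hseries.eq_zero) n

lemma sum {ι : Type*} {t : Finset ι} {A : ι → ℂ⟦X⟧} {f : ι → ℂ → ℂ}
    (h : ∀ i ∈ t, RepresentsOnDisc (A i) (f i)) :
    RepresentsOnDisc (∑ i ∈ t, A i) fun q => ∑ i ∈ t, f i q := by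
  intro q hq
  simp only [map_sum, sum_mul]
  exact hasSum_sum fun i hi => h i hi q hq

lemma mul (hA : RepresentsOnDisc A f) (hB : RepresentsOnDisc B g) :
    RepresentsOnDisc (A * B) fun q => f q * g q := by
  intro q hq
  have hprod := hasSum_sum_range_mul_of_summable_norm (hA q hq).summable.norm
    (hB q hq).summable.norm
  rw [(hA q hq).tsum_eq, (hB q hq).tsum_eq] at hprod
  have hcoeff (n : ℕ) : coeff n (A * B) * q ^ n =
      ∑ k ∈ range (n + 1), coeff k A * q ^ k * (coeff (n - k) B * q ^ (n - k)) := by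
    rw [coeff_mul, sum_mul, Finset.Nat.sum_antidiagonal_eq_sum_range_succ_mk]
    refine sum_congr rfl fun k hk => ?_
    rw [mul_mul_mul_comm, ← pow_add, Nat.add_sub_cancel' (Nat.lt_succ_iff.1 (mem_range.1 hk))]
  simpa only [hcoeff] using hprod

lemma coe_polynomial (P : ℂ[X]) : RepresentsOnDisc P fun q => P.eval q := by
  intro q _
  simp only [Polynomial.eval_eq_sum, Polynomial.coeff_coe]
  exact hasSum_sum_of_ne_finset_zero fun n hn => by
    rw [Polynomial.notMem_support_iff.1 hn, zero_mul]

lemma polynomial_smul (P : ℂ[X]) (hA : RepresentsOnDisc A f) :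
    RepresentsOnDisc (P • A) fun q => P.eval q * f q := by
  rw [Algebra.smul_def, PowerSeries.algebraMap_apply']
  simpa using (coe_polynomial P).mul hA

lemma theta_Dop (hA : RepresentsOnDisc A f) : RepresentsOnDisc (theta A) (Dop f) := by
  intro q hq
  obtain ⟨r, hqr, hr⟩ := exists_between hq
  have hr₀ : 0 ≤ r := (norm_nonneg q).trans hqr.le
  have hqb : q ∈ Metric.ball (0 : ℂ) r := by simpa using hqr
  have hmajorant : Summable fun n => ‖coeff n A‖ * r ^ n := by
    simpa [abs_of_nonneg hr₀] using (hA r (by simpa [abs_of_nonneg hr₀] using hr)).summable.norm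
  have hderiv := Complex.hasSum_deriv_of_summable_norm (F := fun n z => coeff n A * z ^ n)
    hmajorant (fun n => by fun_prop) Metric.isOpen_ball
    (fun n z hz => by
      rw [norm_mul, norm_pow]
      gcongr
      simpa using (Metric.mem_ball.1 hz).le) hqb
  have hsum_eq : deriv (fun z => ∑' n, coeff n A * z ^ n) q = deriv f q := by
    refine EventuallyEq.deriv_eq ?_
    filter_upwards [Metric.isOpen_ball.mem_nhds hqb] with z hz
    exact (hA z ((by simpa using hz : ‖z‖ < r).trans hr)).tsum_eq
  rw [hsum_eq] at hderiv
  have hterm (n : ℕ) : coeff n (theta A) * q ^ n = q * deriv (fun z => coeff n A * z ^ n) q := by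
    rw [theta, coeff_mk, deriv_const_mul_field, deriv_pow_field]
    rcases n with _ | n
    · simp
    · rw [Nat.add_sub_cancel, pow_succ]
      ring
  simpa only [hterm, Dop] using hderiv.mul_left q

lemma theta_iterate_Dop (hA : RepresentsOnDisc A f) (i : ℕ) :
    RepresentsOnDisc (theta^[i] A) (Dop^[i] f) := by
  induction i with
  | zero => exact hA
  | succ i ih =>
    simp only [Function.iterate_succ_apply']
    exact ih.theta_Dop

end RepresentsOnDisc

lemma summable_sigma_mul_pow (s : ℕ) {q : ℂ} (hq : ‖q‖ < 1) :
    Summable fun n : ℕ => (sigma s n : ℂ) * q ^ n := by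
  refine .of_norm_bounded (summable_pow_mul_geometric_of_norm_lt_one (s + 1)
    (by simpa using hq : ‖‖q‖‖ < 1)) fun n => ?_
  rw [norm_mul, norm_pow, Complex.norm_natCast]
  gcongr
  exact_mod_cast sigma_le_pow_succ s n

lemma representsOnDisc_sigmaSeries (s : ℕ) :
    RepresentsOnDisc (sigmaSeries s) fun q =>
      ∑' n : ℕ, ((n : ℂ) + 1) ^ s * q ^ (n + 1) / (1 - q ^ (n + 1)) := by
  intro q hq
  have hsummable := summable_sigma_mul_pow s hq
  have hlambert := tsum_pow_div_one_sub_eq_tsum_sigma hq s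
  rw [tsum_pnat_eq_tsum_succ (f := fun n : ℕ => (n : ℂ) ^ s * q ^ n / (1 - q ^ n)),
    tsum_pnat_eq_tsum_succ (f := fun n : ℕ => (sigma s n : ℂ) * q ^ n)] at hlambert
  simp only [sigmaSeries, coeff_mk]
  convert hsummable.hasSum using 1
  rw [hsummable.tsum_eq_zero_add]
  simpa using hlambert

theorem F₃_derivatives_linearly_independent
    (m : ℕ) (p : ℕ → Polynomial ℂ) (hp : ∃ i ≤ m, p i ≠ 0) :
    ∃ q : ℂ, ‖q‖ < 1 ∧
      ∑ i ∈ Finset.range (m + 1), (p i).eval q * (Dop^[i] F₃) q ≠ 0 := by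
  by_contra! hvanish
  have hrel : ∑ i ∈ range (m + 1), p i • theta^[i] (sigmaSeries 2) = 0 :=
    (RepresentsOnDisc.sum fun i _ =>
      ((representsOnDisc_sigmaSeries 2).theta_iterate_Dop i).polynomial_smul (p i)).eq_zero hvanish
  obtain ⟨i, him, hpi⟩ := hp
  exact hpi (linearIndependent_iff'.1 (linearIndependent_theta_iterate_sigmaSeries one_lt_two)
    (range (m + 1)) p hrel i (mem_range.2 (Nat.lt_succ_of_le him)))
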